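/- arXiv:0804.1945 — 3 statements merged into one kernel-verified Lean document; each statement's English description precedes it below -/
import Mathlib

section
/- Let S ⊂ ℝ^k be a halfspace and let Σ ⊆ S be an additive semigroup containing 0 (i.e., λ, μ ∈ Σ implies λ + μ ∈ Σ). Then the unital Banach algebra AP^k_Σ of almost periodic functions with Bohr-Fourier spectrum in Σ is an Hermite ring. -/
/- Almost periodic functions of `k` real variables, their Bohr-Fourier
coefficients and spectra, the Wiener algebra, and halfspaces. -/

open MeasureTheory Filter BoundedContinuousFunction

noncomputable section

/-- The Banach algebra of bounded continuous functions `ℝ^k → ℂ` (sup norm). -/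
abbrev APB (k : ℕ) := BoundedContinuousFunction (Fin k → ℝ) ℂ

/-- The elementary exponential `e_λ(x) = e^{i⟨λ,x⟩}` as a bounded continuous function. -/
def apExp (k : ℕ) (lam : Fin k → ℝ) : APB k :=
  BoundedContinuousFunction.ofNormedAddCommGroup
    (fun x => Complex.exp (Complex.I * ((∑ j, lam j * x j : ℝ) : ℂ)))
    (by fun_prop) 1
    (fun x => by
      simp [Complex.norm_exp, Complex.mul_re])

/-- `AP^k`: the closed subalgebra of `L^∞`-type bounded continuous functions
generated by all exponentials `e_λ`, `λ ∈ ℝ^k`. -/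
def APalg (k : ℕ) : Subalgebra ℂ (APB k) :=
  (Algebra.adjoin ℂ (Set.range (apExp k))).topologicalClosure

/-- The Bohr-Fourier coefficient
`f_λ = lim_{T→∞} (2T)^{-k} ∫_{[-T,T]^k} e^{-i⟨λ,x⟩} f(x) dx`. -/
def bohrCoeff (k : ℕ) (f : (Fin k → ℝ) → ℂ) (lam : Fin k → ℝ) : ℂ :=
  limUnder atTop (fun T : ℝ =>
    (((2 * T) ^ k : ℝ) : ℂ)⁻¹ *
      ∫ x in Set.Icc (fun _ => -T : Fin k → ℝ) (fun _ => T),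
        Complex.exp (-(Complex.I * ((∑ j, lam j * x j : ℝ) : ℂ))) * f x)

/-- The Bohr-Fourier spectrum `σ(f) = {λ : f_λ ≠ 0}`. -/
def bohrSpectrum (k : ℕ) (f : (Fin k → ℝ) → ℂ) : Set (Fin k → ℝ) :=
  {lam | bohrCoeff k f lam ≠ 0}

/-- Membership in `AP^k_Δ = {f ∈ AP^k : σ(f) ⊆ Δ}`. -/
def APmem (k : ℕ) (Δ : Set (Fin k → ℝ)) (f : APB k) : Prop :=
  f ∈ APalg k ∧ bohrSpectrum k ⇑f ⊆ Δ

/-- Membership in the Wiener algebra `APW^k_Δ`: almost periodic with spectrum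
in `Δ` and absolutely convergent Bohr-Fourier series. -/
def APWmem (k : ℕ) (Δ : Set (Fin k → ℝ)) (f : APB k) : Prop :=
  APmem k Δ f ∧ Summable (fun lam => ‖bohrCoeff k (⇑f) lam‖)

/-- The Wiener norm `‖f‖_W = ∑_λ |f_λ|`. -/
def wienerNorm (k : ℕ) (f : (Fin k → ℝ) → ℂ) : ℝ :=
  ∑' lam, ‖bohrCoeff k f lam‖

/-- A halfspace `S ⊂ ℝ^k`: `ℝ^k = S ∪ (-S)`, `S ∩ (-S) = {0}`, and `S` is
closed under addition and under multiplication by nonnegative reals. -/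
structure IsHalfspace (k : ℕ) (S : Set (Fin k → ℝ)) : Prop where
  union : S ∪ -S = Set.univ
  inter : S ∩ -S = {0}
  add_mem : ∀ x ∈ S, ∀ y ∈ S, x + y ∈ S
  smul_mem : ∀ x ∈ S, ∀ a : ℝ, 0 ≤ a → a • x ∈ S

/-! By Fejér means, `AP^k_Σ` is the closed span of the exponentials with frequencies in `Σ`, so a
unimodular row is approximated by a row `P` of trigonometric polynomials that is unimodular up to an
error of norm less than one. Since `Σ` lies in a halfspace, some vector `v` has positive inner
product with each of the finitely many nonzero frequencies involved. Translating the argument by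
`t i v`, `t ≥ 0`, damps these frequencies and, by Phragmén–Lindelöf, does not increase the norm of
the error; as `t → ∞` it deforms `P`, through unimodular rows, to a row of constants. The orbits of
unimodular rows under invertible matrices are open, so `P` is equivalent to that row of constants,
hence to `(1, 0, …, 0)`. -/

open scoped Matrix Topology

/-! ### Unimodular rows -/

/-- A commutative ring over which every nonempty unimodular row is the first row of an invertible
matrix. Rows are indexed by `Fin (m + 1)`, so that a first entry exists. -/
def IsHermiteRing (R : Type*) [CommRing R] : Prop :=
  ∀ (m : ℕ) (a b : Fin (m + 1) → R), a ⬝ᵥ b = 1 →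
    ∃ M : Matrix (Fin (m + 1)) (Fin (m + 1)) R, IsUnit M ∧ M 0 = a

/-- Two rows are equivalent if an invertible matrix carries the first to the second. -/
def RowEquiv {n R : Type*} [Fintype n] [DecidableEq n] [CommRing R] (a a' : n → R) : Prop :=
  ∃ G : Matrix n n R, IsUnit G ∧ a ᵥ* G = a'

section NormedRing

variable {n A : Type*} [Fintype n] [NormedCommRing A]

theorem continuous_norm_one_sub_dotProduct :
    Continuous fun x : (n → A) × (n → A) => ‖1 - x.1 ⬝ᵥ x.2‖ := by
  fun_prop

theorem isUnit_of_norm_one_sub_lt_one [CompleteSpace A] {x : A} (hx : ‖1 - x‖ < 1) :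
    IsUnit x := by
  simpa using isUnit_one_sub_of_norm_lt_one hx

theorem isUnit_dotProduct_of_tendsto [CompleteSpace A] {X : Type*} {l : Filter X} [l.NeBot]
    {p q : X → n → A} {a b : n → A} (hp : Tendsto p l (𝓝 a)) (hq : Tendsto q l (𝓝 b)) {C : ℝ}
    (h : ∀ᶠ x in l, ‖1 - p x ⬝ᵥ q x‖ ≤ C) (hC : C < 1) : IsUnit (a ⬝ᵥ b) :=
  isUnit_of_norm_one_sub_lt_one <| lt_of_le_of_lt
    (le_of_tendsto ((continuous_norm_one_sub_dotProduct.tendsto _).comp (hp.prodMk_nhds hq)) h) hC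

end NormedRing

section RowEquiv

variable {n R A : Type*} [Fintype n] [DecidableEq n] [CommRing R]

theorem RowEquiv.symm {a b : n → R} (hab : RowEquiv a b) : RowEquiv b a := by
  obtain ⟨G, ⟨U, rfl⟩, rfl⟩ := hab
  exact ⟨_, U⁻¹.isUnit, by rw [Matrix.vecMul_vecMul, Units.mul_inv, Matrix.vecMul_one]⟩

theorem RowEquiv.trans {a b c : n → R} (hab : RowEquiv a b) (hbc : RowEquiv b c) :
    RowEquiv a c := by
  obtain ⟨G, hG, rfl⟩ := hab
  obtain ⟨H, hH, rfl⟩ := hbc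
  exact ⟨G * H, hG.mul hH, (Matrix.vecMul_vecMul _ _ _).symm⟩

theorem RowEquiv.of_dotProduct_eq_one {a a' b : n → R} (h : a ⬝ᵥ b = 1)
    (h' : IsUnit (a' ⬝ᵥ b)) : RowEquiv a a' := by
  refine ⟨1 + Matrix.vecMulVec b (a' - a), ?_, ?_⟩
  · rwa [Matrix.isUnit_iff_isUnit_det, Matrix.vecMulVec_eq Unit,
      Matrix.det_one_add_replicateCol_mul_replicateRow, sub_dotProduct, h, add_sub_cancel]
  · rw [Matrix.vecMul_add, Matrix.vecMul_one, Matrix.vecMul_vecMulVec, h, one_smul,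
      add_sub_cancel]

theorem RowEquiv.of_isUnit_dotProduct {a a' b : n → R} (h : IsUnit (a ⬝ᵥ b))
    (h' : IsUnit (a' ⬝ᵥ b)) : RowEquiv a a' := by
  obtain ⟨u, hu⟩ := h
  refine .of_dotProduct_eq_one (b := (↑u⁻¹ : R) • b) ?_ ?_
  · rw [dotProduct_smul, ← hu, smul_eq_mul, Units.inv_mul]
  · rw [dotProduct_smul, smul_eq_mul]
    exact u⁻¹.isUnit.mul h'

theorem RowEquiv.single_of_isUnit_apply (i : n) {j : n} {a : n → R} (hj : IsUnit (a j)) :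
    RowEquiv (Pi.single i 1) a := by
  by_cases hij : i = j
  · subst hij
    exact .of_isUnit_dotProduct (b := Pi.single i 1) (by simp) (by simpa)
  · have hi : RowEquiv (Pi.single i 1) (Pi.single j 1 : n → R) :=
      .of_isUnit_dotProduct (b := Pi.single i 1 + Pi.single j 1) (by simp [hij])
        (by simp [Ne.symm hij])
    exact hi.trans (.of_isUnit_dotProduct (b := Pi.single j 1) (by simp) (by simpa))

theorem RowEquiv.single_algebraMap {K : Type*} [Field K] [Algebra K R] (i : n) {c : n → K}
    {b : n → R} (h : IsUnit ((algebraMap K R ∘ c) ⬝ᵥ b)) :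
    RowEquiv (Pi.single i 1) (algebraMap K R ∘ c) := by
  obtain _ | _ := subsingleton_or_nontrivial R
  · exact ⟨1, isUnit_one, Subsingleton.elim _ _⟩
  obtain ⟨j, hj⟩ : ∃ j, c j ≠ 0 := by
    by_contra! hc
    simp [dotProduct, hc] at h
  exact .single_of_isUnit_apply i ((Ne.isUnit hj).map (algebraMap K R))

theorem IsHermiteRing.of_rowEquiv_single
    (h : ∀ (m : ℕ) (a b : Fin (m + 1) → R), a ⬝ᵥ b = 1 → RowEquiv (Pi.single 0 1) a) :
    IsHermiteRing R := fun m a b hab => by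
  obtain ⟨M, hM, rfl⟩ := h m a b hab
  exact ⟨M, hM, by rw [Matrix.single_one_vecMul]; rfl⟩

theorem IsHermiteRing.exists_matrix_mem_subalgebra {K : Type*} [CommRing K] [Algebra K R]
    {B : Subalgebra K R} (hB : IsHermiteRing B) {m : ℕ} {a b : Fin (m + 1) → R}
    (ha : ∀ i, a i ∈ B) (hb : ∀ i, b i ∈ B) (hab : a ⬝ᵥ b = 1) :
    ∃ M N : Matrix (Fin (m + 1)) (Fin (m + 1)) R,
      (∀ i j, M i j ∈ B) ∧ (∀ i j, N i j ∈ B) ∧ (∀ j, M 0 j = a j) ∧ M * N = 1 ∧ N * M = 1 := by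
  lift a to Fin (m + 1) → B using ha
  lift b to Fin (m + 1) → B using hb
  obtain ⟨_, ⟨U, rfl⟩, rfl⟩ := hB m a b (Subtype.ext (by simpa [dotProduct] using hab))
  let toMatrix := B.val.mapMatrix (m := Fin (m + 1))
  refine ⟨toMatrix U, toMatrix ↑U⁻¹, fun i j => (U.1 i j).2, fun i j => (U⁻¹.1 i j).2,
    fun _ => rfl, ?_, ?_⟩
  · rw [← map_mul, Units.mul_inv, map_one]
  · rw [← map_mul, Units.inv_mul, map_one]

variable [NormedCommRing A] [CompleteSpace A]

theorem eventually_rowEquiv {a b : n → A} (h : IsUnit (a ⬝ᵥ b)) :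
    ∀ᶠ x in 𝓝 a, RowEquiv x a := by
  have hcont : Continuous fun x : n → A => x ⬝ᵥ b := continuous_id.dotProduct continuous_const
  filter_upwards [hcont.continuousAt.eventually (Units.isOpen.mem_nhds h)] with x hx
  exact .of_isUnit_dotProduct hx h

theorem exists_rowEquiv_comp_of_denseRange {D : Type*} {f : D → A} (hf : DenseRange f)
    {a b : n → A} (hab : a ⬝ᵥ b = 1) :
    ∃ P Q : n → D, ‖1 - (f ∘ P) ⬝ᵥ (f ∘ Q)‖ < 1 ∧ RowEquiv (f ∘ P) a := by
  have hrow : ∀ᶠ x in 𝓝 a, RowEquiv x a := eventually_rowEquiv (b := b) (by simp [hab])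
  have hnear : ∀ᶠ x in 𝓝 (a, b), ‖1 - x.1 ⬝ᵥ x.2‖ < 1 :=
    (continuous_norm_one_sub_dotProduct.tendsto (a, b)).eventually_lt_const (by simp [hab])
  have hdense := DenseRange.piMap fun _ : n => hf
  obtain ⟨_, ⟨⟨P, Q⟩, rfl⟩, hPQ, hP⟩ := ((mem_closure_iff_frequently.1
    (hdense.prodMap hdense (a, b))).and_eventually (hnear.and (hrow.prod_inl_nhds b))).exists
  exact ⟨P, Q, hPQ, hP⟩

theorem RowEquiv.of_isPreconnected {X : Type*} [TopologicalSpace X] {s : Set X}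
    (hs : IsPreconnected s) {p q : X → n → A} (hp : ContinuousOn p s)
    (hpq : ∀ x ∈ s, IsUnit (p x ⬝ᵥ q x)) {x y : X} (hx : x ∈ s) (hy : y ∈ s) :
    RowEquiv (p x) (p y) := by
  refine hs.induction₂ (fun x y => RowEquiv (p x) (p y)) (fun x hx => ?_)
    (fun _ _ _ _ _ _ => .trans) (fun _ _ _ _ => .symm) hx hy
  exact ((hp x hx).eventually (eventually_rowEquiv (hpq x hx))).mono fun _ => .symm

theorem RowEquiv.of_isPreconnected_of_tendsto {X : Type*} [TopologicalSpace X] {s : Set X}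
    (hs : IsPreconnected s) {p q : X → n → A} (hp : ContinuousOn p s)
    (hpq : ∀ x ∈ s, IsUnit (p x ⬝ᵥ q x)) {l : Filter X} [l.NeBot] (hl : ∀ᶠ x in l, x ∈ s)
    {a b : n → A} (hpa : Tendsto p l (𝓝 a)) (hab : IsUnit (a ⬝ᵥ b)) {y : X} (hy : y ∈ s) :
    RowEquiv a (p y) := by
  obtain ⟨x, hxa, hx⟩ := ((hpa.eventually (eventually_rowEquiv hab)).and hl).exists
  exact hxa.symm.trans (.of_isPreconnected hs hp hpq hx hy)

end RowEquiv

/-! ### Almost invariant finite sets -/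

theorem exists_succ_le_mul_of_le_pow {u : ℕ → ℝ} {d : ℕ} (hu : ∀ N, u N ≤ (N + 1 : ℕ) ^ d)
    (hu₀ : 0 < u 0) {r : ℝ} (hr : 1 < r) : ∃ N, u (N + 1) ≤ r * u N := by
  by_contra! hlt
  have hgeom (N : ℕ) : u 0 * r ^ N ≤ u N := by
    induction N with
    | zero => simp
    | succ N ih =>
      calc u 0 * r ^ (N + 1) = r * (u 0 * r ^ N) := by ring
        _ ≤ r * u N := by gcongr
        _ ≤ u (N + 1) := (hlt N).le
  have hpos : 0 < u 0 / r := by positivity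
  obtain ⟨N, hN⟩ := (((tendsto_pow_const_div_const_pow_of_one_lt d hr).comp
    (tendsto_add_atTop_nat 1)).eventually_lt_const hpos).exists
  have hN' : ((N + 1 : ℕ) : ℝ) ^ d < u 0 * r ^ N := by
    rw [Function.comp_apply, div_lt_div_iff₀ (by positivity) (by positivity), pow_succ,
      ← mul_assoc] at hN
    exact lt_of_mul_lt_mul_right hN (by positivity)
  exact (hN'.trans_le (hgeom N)).not_ge (hu N)

section AddCommGroup

variable {G : Type*} [AddCommGroup G] [DecidableEq G]

/-- The sums `∑ μ ∈ M, n μ • μ` with coefficients `0 ≤ n μ ≤ N`. -/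
def latticeBox (M : Finset G) (N : ℕ) : Finset G :=
  (Fintype.piFinset fun _ : M => Finset.range (N + 1)).image fun n => ∑ μ : M, n μ • (μ : G)

theorem card_latticeBox_le (M : Finset G) (N : ℕ) :
    (latticeBox M N).card ≤ (N + 1) ^ M.card :=
  Finset.card_image_le.trans_eq (by simp)

theorem latticeBox_nonempty (M : Finset G) (N : ℕ) : (latticeBox M N).Nonempty :=
  (Fintype.piFinset_nonempty.2 fun _ => Finset.nonempty_range_add_one).image _

theorem latticeBox_subset_succ (M : Finset G) (N : ℕ) : latticeBox M N ⊆ latticeBox M (N + 1) :=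
  Finset.image_subset_image <| Fintype.piFinset_subset _ _ fun _ =>
    Finset.range_subset_range.2 (by simp)

theorem add_mem_latticeBox_succ {M : Finset G} {N : ℕ} {μ β : G} (hμ : μ ∈ M)
    (hβ : β ∈ latticeBox M N) : μ + β ∈ latticeBox M (N + 1) := by
  obtain ⟨n, hn, rfl⟩ := Finset.mem_image.1 hβ
  refine Finset.mem_image.2 ⟨n + Pi.single ⟨μ, hμ⟩ 1, Fintype.mem_piFinset.2 fun ν => ?_, ?_⟩
  · have hν := Finset.mem_range.1 (Fintype.mem_piFinset.1 hn ν)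
    have hsingle : (Pi.single ⟨μ, hμ⟩ 1 : M → ℕ) ν ≤ 1 := by
      rw [Pi.single_apply]; split_ifs <;> simp
    rw [Finset.mem_range, Pi.add_apply]
    lia
  · simp [add_smul, Finset.sum_add_distrib, Pi.single_apply, add_comm]

theorem exists_finset_card_filter_add_notMem_le (M : Finset G) {ε : ℝ} (hε : 0 < ε) :
    ∃ B : Finset G, B.Nonempty ∧
      ∀ μ ∈ M, ((B.filter (μ + · ∉ B)).card : ℝ) ≤ ε * B.card := by
  obtain ⟨N, hN⟩ := exists_succ_le_mul_of_le_pow (u := fun N => (latticeBox M N).card)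
    (fun N => mod_cast card_latticeBox_le M N) (mod_cast (latticeBox_nonempty M 0).card_pos)
    (lt_add_of_pos_right 1 hε)
  refine ⟨latticeBox M N, latticeBox_nonempty M N, fun μ hμ => ?_⟩
  have hcard : ((latticeBox M N).filter (μ + · ∉ latticeBox M N)).card ≤
      (latticeBox M (N + 1) \ latticeBox M N).card :=
    Finset.card_le_card_of_injOn (μ + ·)
      (fun β hβ => by
        obtain ⟨hβ, hμβ⟩ := Finset.mem_filter.1 hβ
        exact Finset.mem_sdiff.2 ⟨add_mem_latticeBox_succ hμ hβ, hμβ⟩)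
      (add_right_injective μ).injOn
  have hsdiff := Finset.card_sdiff_add_card_eq_card (latticeBox_subset_succ M N)
  have : (((latticeBox M N).filter (μ + · ∉ latticeBox M N)).card : ℝ) +
      (latticeBox M N).card ≤ (latticeBox M (N + 1)).card := by
    exact_mod_cast (Nat.add_le_add_right hcard _).trans_eq hsdiff
  linarith

theorem exists_tendsto_card_filter_add_mem_div_card :
    ∃ B : Finset G × ℕ → Finset G,
      ∀ μ, Tendsto (fun i => (((B i).filter (μ + · ∈ B i)).card / (B i).card : ℝ)) atTop (𝓝 1) := by
  choose B hB hMB using fun i : Finset G × ℕ =>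
    exists_finset_card_filter_add_notMem_le i.1 (ε := 1 / ((i.2 : ℝ) + 1)) (by positivity)
  refine ⟨B, fun μ => ?_⟩
  have hlim : Tendsto (fun i : Finset G × ℕ => 1 - 1 / ((i.2 : ℝ) + 1)) atTop (𝓝 1) := by
    rw [← prod_atTop_atTop_eq]
    simpa using (tendsto_one_div_add_atTop_nhds_zero_nat.comp tendsto_snd).const_sub (1 : ℝ)
  refine tendsto_of_tendsto_of_tendsto_of_le_of_le' hlim tendsto_const_nhds ?_
    (.of_forall fun i => div_le_one_of_le₀ (mod_cast Finset.card_filter_le _ _) (by positivity))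
  filter_upwards [Ici_mem_atTop (({μ}, 0) : Finset G × ℕ)] with i hi
  have hcard : (0 : ℝ) < (B i).card := mod_cast (hB i).card_pos
  have hsplit : (((B i).filter (μ + · ∈ B i)).card : ℝ) + ((B i).filter (μ + · ∉ B i)).card =
      (B i).card := mod_cast Finset.card_filter_add_card_filter_not _
  rw [le_div_iff₀ hcard, sub_mul, one_mul]
  linarith [hMB i μ (Finset.singleton_subset_iff.1 hi.1)]

end AddCommGroup

/-! ### Halfspaces -/

theorem IsHalfspace.convex_sdiff_zero {k : ℕ} {S : Set (Fin k → ℝ)} (hS : IsHalfspace k S) :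
    Convex ℝ (S \ {0}) := by
  refine convex_iff_forall_pos.2 fun x hx y hy a b ha hb _ => ?_
  have hax := hS.smul_mem x hx.1 a ha.le
  have hby := hS.smul_mem y hy.1 b hb.le
  refine ⟨hS.add_mem _ hax _ hby, fun hsum => ?_⟩
  have : a • x ∈ S ∩ -S := ⟨hax, by rwa [Set.mem_neg, neg_eq_of_add_eq_zero_right hsum]⟩
  rw [hS.inter, Set.mem_singleton_iff, smul_eq_zero_iff_right ha.ne'] at this
  exact hx.2 this

theorem IsHalfspace.zero_notMem_convexHull {k : ℕ} {S : Set (Fin k → ℝ)}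
    (hS : IsHalfspace k S) : (0 : Fin k → ℝ) ∉ convexHull ℝ (S \ {0}) := by
  simp [hS.convex_sdiff_zero.convexHull_eq]

theorem exists_forall_dotProduct_pos {ι : Type*} [Fintype ι] {F : Set (ι → ℝ)} (hF : F.Finite)
    (h0 : (0 : ι → ℝ) ∉ convexHull ℝ F) : ∃ v : ι → ℝ, ∀ x ∈ F, 0 < x ⬝ᵥ v := by
  classical
  obtain ⟨φ, u, hφ0, hφF⟩ := geometric_hahn_banach_point_closed (convex_convexHull ℝ F)
    (hF.isClosed_convexHull ℝ) h0
  obtain ⟨v, hv⟩ := (dotProductEquiv ℝ ι).surjective φ.toLinearMap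
  refine ⟨v, fun x hx => ?_⟩
  calc 0 < φ x := (map_zero φ ▸ hφ0).trans (hφF x (subset_convexHull ℝ F hx))
    _ = x ⬝ᵥ v := by rw [dotProduct_comm]; exact (LinearMap.congr_fun hv x).symm

/-! ### Limits of bounded families of operators -/

section Limits

variable {𝕜 E F ι : Type*} [NontriviallyNormedField 𝕜] [NormedAddCommGroup E] [NormedSpace 𝕜 E]
  [NormedAddCommGroup F] [NormedSpace 𝕜 F] {φ : ι → E →L[𝕜] F} {l : Filter ι} {C : ℝ} {s : Set E}

theorem tendsto_of_dense_span (hφ : ∀ i, ‖φ i‖ ≤ C) {ψ : E →L[𝕜] F}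
    (hs : Dense (Submodule.span 𝕜 s : Set E)) (h : ∀ x ∈ s, Tendsto (φ · x) l (𝓝 (ψ x))) (x : E) :
    Tendsto (φ · x) l (𝓝 (ψ x)) := by
  have hequi : Equicontinuous fun i => ⇑(φ i) :=
    (LipschitzWith.uniformEquicontinuous _ C.toNNReal fun i =>
      (φ i).lipschitz.weaken (NNReal.le_toNNReal_of_coe_le (hφ i))).equicontinuous
  have hclosed := hequi.isClosed_setOfPred_tendsto (l := l) ψ.continuous
  refine hclosed.closure_subset_iff.2 (fun y hy => ?_) (hs x)
  induction hy using Submodule.span_induction with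
  | mem y hy => exact h y hy
  | zero => simpa using tendsto_const_nhds
  | add y z _ _ hy hz => simpa using Tendsto.add hy hz
  | smul c y _ hy => simpa using Tendsto.const_smul hy c

theorem exists_tendsto_of_dense_span [CompleteSpace F] [l.NeBot] (hφ : ∀ i, ‖φ i‖ ≤ C)
    (hs : Dense (Submodule.span 𝕜 s : Set E)) (h : ∀ x ∈ s, ∃ y, Tendsto (φ · x) l (𝓝 y)) (x : E) :
    ∃ y, Tendsto (φ · x) l (𝓝 y) := by
  have hdiff : Tendsto (fun i : ι × ι => (φ i.2 - φ i.1) x) (l ×ˢ l) (𝓝 0) := by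
    refine tendsto_of_dense_span (ψ := 0) (C := C + C)
      (fun i => (norm_sub_le _ _).trans (add_le_add (hφ _) (hφ _))) hs (fun y hy => ?_) x
    obtain ⟨z, hz⟩ := h y hy
    simpa using (hz.comp tendsto_snd).sub (hz.comp tendsto_fst)
  refine cauchy_map_iff_exists_tendsto.1 (cauchy_map_iff'.2 ?_)
  rw [uniformity_eq_comap_nhds_zero, tendsto_comap_iff]
  exact hdiff

end Limits

/-! ### Averages of bounded continuous functions -/

section Average

variable {X : Type*} [TopologicalSpace X] [MeasurableSpace X] [OpensMeasurableSpace X]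

/-- The average of a bounded continuous function with respect to a finite measure, as a continuous
linear functional. -/
def averageL (μ : Measure X) [IsFiniteMeasure μ] : (X →ᵇ ℂ) →L[ℂ] ℂ :=
  LinearMap.mkContinuous
    { toFun f := ⨍ x, f x ∂μ
      map_add' f g := by
        simp only [average_eq, coe_add, Pi.add_apply]
        rw [integral_add (f.integrable μ) (g.integrable μ), smul_add]
      map_smul' c f := by
        simp only [average_eq, coe_smul, integral_smul, RingHom.id_apply]
        rw [smul_comm] }
    1 fun f => by
      rw [LinearMap.coe_mk, AddHom.coe_mk, average_eq, norm_smul, norm_inv,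
        Real.norm_of_nonneg measureReal_nonneg]
      calc (μ.real Set.univ)⁻¹ * ‖∫ x, f x ∂μ‖
          ≤ (μ.real Set.univ)⁻¹ * (μ.real Set.univ * ‖f‖) := by
            gcongr
            exact f.norm_integral_le_mul_norm μ
        _ ≤ 1 * ‖f‖ := by
            rw [← mul_assoc]
            gcongr
            exact inv_mul_le_one

theorem averageL_apply (μ : Measure X) [IsFiniteMeasure μ] (f : X →ᵇ ℂ) :
    averageL μ f = ⨍ x, f x ∂μ := rfl

theorem norm_averageL_le (μ : Measure X) [IsFiniteMeasure μ] : ‖averageL μ‖ ≤ 1 :=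
  LinearMap.mkContinuous_norm_le _ zero_le_one _

theorem norm_averageL_mul_le (μ : Measure X) [IsFiniteMeasure μ] (f : X →ᵇ ℂ) {g : X →ᵇ ℂ}
    (hg : ∀ x, (‖g x‖ : ℂ) = g x) : ‖averageL μ (f * g)‖ ≤ ‖f‖ * ‖averageL μ g‖ := by
  have hgint : ‖∫ x, g x ∂μ‖ = ∫ x, ‖g x‖ ∂μ := by
    calc ‖∫ x, g x ∂μ‖ = ‖∫ x, (‖g x‖ : ℂ) ∂μ‖ := by simp only [hg]
      _ = ∫ x, ‖g x‖ ∂μ := by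
        rw [integral_complex_ofReal, Complex.norm_real, Real.norm_of_nonneg (by positivity)]
  have hfg : ‖∫ x, (f * g) x ∂μ‖ ≤ ‖f‖ * ‖∫ x, g x ∂μ‖ := by
    rw [hgint, ← integral_const_mul]
    refine norm_integral_le_of_norm_le ((g.integrable μ).norm.const_mul _) (.of_forall fun x => ?_)
    rw [mul_apply, norm_mul]
    gcongr
    exact f.norm_coe_le_norm x
  rw [averageL_apply, averageL_apply, average_eq, average_eq, norm_smul, norm_smul,
    mul_left_comm]
  gcongr

theorem average_fintype_prod_eq_prod {ι : Type*} [Fintype ι] {Y : ι → Type*}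
    [∀ i, MeasurableSpace (Y i)] (μ : ∀ i, Measure (Y i)) [∀ i, SigmaFinite (μ i)]
    (f : ∀ i, Y i → ℂ) :
    ⨍ y, ∏ i, f i (y i) ∂Measure.pi μ = ∏ i, ⨍ y, f i y ∂μ i := by
  simp only [average_eq, integral_fintype_prod_eq_prod, measureReal_def, Measure.pi_univ,
    ENNReal.toReal_prod, ← Finset.prod_inv_distrib, Complex.real_smul, Complex.ofReal_prod,
    Finset.prod_mul_distrib]

end Average

theorem tendsto_average_exp_mul_I (c : ℝ) :
    Tendsto (fun T : ℝ => ⨍ t in Set.Icc (-T) T, Complex.exp (c * t * Complex.I)) atTop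
      (𝓝 (if c = 0 then 1 else 0)) := by
  split_ifs with hc
  · refine tendsto_const_nhds.congr' ?_
    filter_upwards [eventually_gt_atTop 0] with T hT
    simp only [hc, Complex.ofReal_zero, zero_mul, Complex.exp_zero]
    exact (setAverage_const (by simpa) (by simp) _).symm
  have hbound (T : ℝ) :
      ‖∫ t in -T..T, Complex.exp (c * t * Complex.I)‖ ≤ 2 / |c| := by
    have hcI : (c * Complex.I : ℂ) ≠ 0 := by simp [hc]
    simp only [mul_right_comm (c : ℂ) _ Complex.I]
    rw [integral_exp_mul_complex hcI, norm_div, norm_mul, Complex.norm_I, mul_one,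
      Complex.norm_real, Real.norm_eq_abs]
    gcongr
    refine (norm_sub_le _ _).trans ?_
    simp [Complex.norm_exp, one_add_one_eq_two]
  have hlim : Tendsto (fun T : ℝ => (2 * T)⁻¹ * (2 / |c|)) atTop (𝓝 0) := by
    simpa using (tendsto_inv_atTop_zero.comp
      (tendsto_id.const_mul_atTop (zero_lt_two' ℝ))).mul_const (2 / |c|)
  refine squeeze_zero_norm' ?_ hlim
  filter_upwards [eventually_ge_atTop 0] with T hT
  rw [setAverage_eq, Real.volume_real_Icc_of_le (by linarith), sub_neg_eq_add, ← two_mul,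
    norm_smul, norm_inv, Real.norm_of_nonneg (by positivity), integral_Icc_eq_integral_Ioc,
    ← intervalIntegral.integral_of_le (by linarith)]
  gcongr
  exact hbound T

/-! ### Trigonometric polynomials -/

variable {k : ℕ}

theorem apExp_apply (lam x : Fin k → ℝ) :
    apExp k lam x = Complex.exp ((lam ⬝ᵥ x : ℝ) * Complex.I) :=
  congrArg Complex.exp (mul_comm _ _)

theorem apExp_zero : apExp k 0 = 1 := by
  ext x
  simp [apExp_apply]

theorem apExp_add (lam μ : Fin k → ℝ) : apExp k (lam + μ) = apExp k lam * apExp k μ := by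
  ext x
  simp [apExp_apply, add_dotProduct, Complex.exp_add, add_mul]

theorem star_apExp (lam : Fin k → ℝ) : star (apExp k lam) = apExp k (-lam) := by
  ext x
  simp [apExp_apply, ← Complex.exp_conj]

theorem norm_apExp_le (lam : Fin k → ℝ) : ‖apExp k lam‖ ≤ 1 :=
  norm_ofNormedAddCommGroup_le _ zero_le_one _

theorem adjoin_apExp_toSubmodule (Λ : AddSubmonoid (Fin k → ℝ)) :
    Subalgebra.toSubmodule (Algebra.adjoin ℂ (apExp k '' Λ)) =
      Submodule.span ℂ (apExp k '' Λ) := by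
  let M : Submonoid (APB k) :=
    { carrier := apExp k '' Λ
      one_mem' := ⟨0, Λ.zero_mem, apExp_zero⟩
      mul_mem' := by
        rintro _ _ ⟨lam, hlam, rfl⟩ ⟨μ, hμ, rfl⟩
        exact ⟨lam + μ, Λ.add_mem hlam hμ, apExp_add lam μ⟩ }
  have hclosure : Submonoid.closure (apExp k '' Λ) ≤ M := Submonoid.closure_le.2 subset_rfl
  exact Algebra.adjoin_eq_span_of_subset _ (Set.Subset.trans hclosure Submodule.subset_span)

namespace APalg

/-- The exponential `apExp k lam` as an element of `APalg k`. -/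
def exp (lam : Fin k → ℝ) : APalg k :=
  ⟨apExp k lam, subset_closure (Algebra.subset_adjoin ⟨lam, rfl⟩)⟩

theorem coe_exp (lam : Fin k → ℝ) : (exp lam : APB k) = apExp k lam := rfl

theorem norm_exp_le (lam : Fin k → ℝ) : ‖exp lam‖ ≤ 1 := norm_apExp_le lam

theorem dense_span_exp : Dense (Submodule.span ℂ (Set.range (exp (k := k))) : Set (APalg k)) := by
  have himage : Subtype.val '' (Submodule.span ℂ (Set.range (exp (k := k))) : Set (APalg k)) =
      Algebra.adjoin ℂ (Set.range (apExp k)) := by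
    change (APalg k).val.toLinearMap '' _ = _
    rw [← Submodule.map_coe, Submodule.map_span, ← Set.range_comp, ← Set.image_univ,
      ← Set.image_univ, ← Subalgebra.coe_toSubmodule]
    exact congrArg SetLike.coe (adjoin_apExp_toSubmodule (k := k) ⊤).symm
  exact Subtype.dense_iff.2 (congrArg closure himage).ge

end APalg

/-! ### Bohr-Fourier coefficients -/

instance isFiniteMeasure_restrict_Icc {α : Type*} [TopologicalSpace α] [Preorder α]
    [CompactIccSpace α] [MeasurableSpace α] (μ : Measure α) [IsFiniteMeasureOnCompacts μ]
    (a b : α) : IsFiniteMeasure (μ.restrict (Set.Icc a b)) :=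
  ⟨by simpa using isCompact_Icc.measure_lt_top⟩

/-- The average over the box `[-T, T]^k`. -/
def boxMean (k : ℕ) (T : ℝ) : APB k →L[ℂ] ℂ :=
  averageL (volume.restrict (Set.Icc (fun _ => -T : Fin k → ℝ) fun _ => T))

theorem norm_boxMean_le (T : ℝ) : ‖boxMean k T‖ ≤ 1 := norm_averageL_le _

theorem boxMean_apply {T : ℝ} (hT : 0 ≤ T) (f : APB k) :
    boxMean k T f =
      (((2 * T) ^ k : ℝ) : ℂ)⁻¹ * ∫ x in Set.Icc (fun _ => -T : Fin k → ℝ) (fun _ => T), f x := by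
  have hvol : volume.real (Set.Icc (fun _ => -T : Fin k → ℝ) fun _ => T) = (2 * T) ^ k := by
    rw [measureReal_def, Real.volume_Icc_pi_toReal fun _ => neg_le_self hT]
    simp [two_mul]
  rw [boxMean, averageL_apply, setAverage_eq, hvol, Complex.real_smul, Complex.ofReal_inv]

theorem boxMean_apExp (lam : Fin k → ℝ) (T : ℝ) :
    boxMean k T (apExp k lam) =
      ∏ j, ⨍ t in Set.Icc (-T) T, Complex.exp (lam j * t * Complex.I) := by
  have hprod (x : Fin k → ℝ) :
      apExp k lam x = ∏ j, Complex.exp (lam j * x j * Complex.I) := by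
    simp [apExp_apply, dotProduct, Finset.sum_mul, Complex.exp_sum]
  rw [boxMean, averageL_apply, ← Set.pi_univ_Icc, volume_pi, Measure.restrict_pi_pi,
    ← average_fintype_prod_eq_prod]
  simp only [hprod]

theorem tendsto_boxMean_apExp (lam : Fin k → ℝ) :
    Tendsto (fun T => boxMean k T (apExp k lam)) atTop (𝓝 (if lam = 0 then 1 else 0)) := by
  have h := tendsto_finsetProd Finset.univ fun j _ => tendsto_average_exp_mul_I (lam j)
  simpa [boxMean_apExp, Finset.prod_ite_zero, funext_iff] using h

theorem exists_tendsto_boxMean (f : APalg k) : ∃ y, Tendsto (fun T => boxMean k T f) atTop (𝓝 y) :=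
  exists_tendsto_of_dense_span (φ := fun T => (boxMean k T).comp (APalg k).toSubmodule.subtypeL)
    (fun T => (ContinuousLinearMap.opNorm_comp_le _ _).trans
      (mul_le_one₀ (norm_boxMean_le T) (norm_nonneg _) (Submodule.norm_subtypeL_le _)))
    APalg.dense_span_exp (Set.forall_mem_range.2 fun lam => ⟨_, tendsto_boxMean_apExp lam⟩) f

theorem tendsto_bohrCoeff (f : APalg k) (lam : Fin k → ℝ) :
    Tendsto (fun T => boxMean k T (apExp k (-lam) * f)) atTop (𝓝 (bohrCoeff k f lam)) := by
  obtain ⟨y, hy⟩ := exists_tendsto_boxMean (APalg.exp (-lam) * f)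
  have hlim : bohrCoeff k f lam = y := by
    refine (hy.congr' ?_).limUnder_eq
    filter_upwards [eventually_ge_atTop 0] with T hT
    rw [boxMean_apply hT]
    simp [apExp_apply, APalg.coe_exp, dotProduct, mul_comm Complex.I]
  rwa [hlim]

/-- The functional `f ↦ f_λ` on `AP^k`. -/
def bohrCoeffL (lam : Fin k → ℝ) : APalg k →L[ℂ] ℂ :=
  LinearMap.mkContinuous
    { toFun f := bohrCoeff k f lam
      map_add' f g := tendsto_nhds_unique (tendsto_bohrCoeff (f + g) lam) <| by
        simpa [mul_add] using (tendsto_bohrCoeff f lam).add (tendsto_bohrCoeff g lam)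
      map_smul' c f := tendsto_nhds_unique (tendsto_bohrCoeff (c • f) lam) <| by
        simpa using (tendsto_bohrCoeff f lam).const_smul c }
    1 fun f => by
      refine le_of_tendsto (tendsto_bohrCoeff f lam).norm (.of_forall fun T => ?_)
      refine ((boxMean k T).le_of_opNorm_le (norm_boxMean_le T) _).trans ?_
      gcongr
      exact (norm_mul_le _ _).trans (mul_le_of_le_one_left (norm_nonneg _) (norm_apExp_le _))

theorem bohrCoeffL_apply (lam : Fin k → ℝ) (f : APalg k) :
    bohrCoeffL lam f = bohrCoeff k f lam := rfl

theorem bohrCoeffL_exp (lam μ : Fin k → ℝ) :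
    bohrCoeffL lam (APalg.exp μ) = if μ = lam then 1 else 0 := by
  refine tendsto_nhds_unique (tendsto_bohrCoeff (APalg.exp μ) lam) ?_
  simpa only [APalg.coe_exp, ← apExp_add, neg_add_eq_zero, eq_comm (a := lam)] using
    tendsto_boxMean_apExp (-lam + μ)

/-! ### Fejér means -/

/-- The Fejér mean `(#B)⁻¹ ∑_{α, β ∈ B} f_{α - β} e_{α - β}` of an almost periodic function `f`. -/
def fejerMean (B : Finset (Fin k → ℝ)) : APalg k →L[ℂ] APalg k :=
  (B.card : ℂ)⁻¹ • ∑ α ∈ B, ∑ β ∈ B, (bohrCoeffL (α - β)).smulRight (APalg.exp (α - β))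

theorem fejerMean_apply (B : Finset (Fin k → ℝ)) (f : APalg k) :
    fejerMean B f = (B.card : ℂ)⁻¹ •
      ∑ α ∈ B, ∑ β ∈ B, bohrCoeff k f (α - β) • APalg.exp (α - β) := by
  simp [fejerMean, bohrCoeffL_apply]

theorem fejerMean_exp (B : Finset (Fin k → ℝ)) (μ : Fin k → ℝ) :
    fejerMean B (APalg.exp μ) =
      ((B.filter (μ + · ∈ B)).card / B.card : ℂ) • APalg.exp μ := by
  have hterm (α β : Fin k → ℝ) : bohrCoeff k (APalg.exp μ) (α - β) • APalg.exp (α - β) =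
      if μ + β = α then APalg.exp μ else 0 := by
    rw [← bohrCoeffL_apply, bohrCoeffL_exp, ite_smul, one_smul, zero_smul,
      if_congr eq_sub_iff_add_eq rfl rfl]
    split_ifs with h
    · rw [← h, add_sub_cancel_right]
    · rfl
  simp_rw [fejerMean_apply, hterm]
  rw [Finset.sum_comm]
  simp_rw [Finset.sum_ite_eq, ← Finset.sum_filter, Finset.sum_const]
  rw [← Nat.cast_smul_eq_nsmul ℂ, smul_smul, div_eq_inv_mul]

/-- The Fejér kernel centred at `x`, as a function of `y`. It is nonnegative, being a multiple of
`|∑_{α ∈ B} e_α (x - y)|²`. -/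
def fejerKernel (B : Finset (Fin k → ℝ)) (x : Fin k → ℝ) : APB k :=
  let h := ∑ α ∈ B, apExp k α x • apExp k (-α)
  (B.card : ℂ)⁻¹ • (h * star h)

theorem norm_fejerKernel_apply (B : Finset (Fin k → ℝ)) (x y : Fin k → ℝ) :
    (‖fejerKernel B x y‖ : ℂ) = fejerKernel B x y := by
  have h : fejerKernel B x y =
      ((B.card : ℝ)⁻¹ * ‖(∑ α ∈ B, apExp k α x • apExp k (-α)) y‖ ^ 2 : ℝ) := by
    push_cast
    rw [← Complex.mul_conj']
    rfl
  rw [h, Complex.norm_real, Real.norm_of_nonneg (by positivity)]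

theorem fejerKernel_eq_sum (B : Finset (Fin k → ℝ)) (x : Fin k → ℝ) :
    fejerKernel B x = (B.card : ℂ)⁻¹ •
      ∑ α ∈ B, ∑ β ∈ B, apExp k (α - β) x • apExp k (-(α - β)) := by
  have hterm (α β : Fin k → ℝ) : apExp k (α - β) x • apExp k (-(α - β)) =
      (apExp k α x • apExp k (-α)) * star (apExp k β x • apExp k (-β)) := by
    rw [star_smul, star_apExp, smul_mul_smul_comm, ← star_apply, star_apExp, ← mul_apply,
      ← apExp_add, ← apExp_add, neg_neg, neg_sub', sub_neg_eq_add, sub_eq_add_neg]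
  simp_rw [hterm, fejerKernel, star_sum, Finset.sum_mul_sum]

theorem tendsto_boxMean_mul_fejerKernel (B : Finset (Fin k → ℝ)) (f : APalg k) (x : Fin k → ℝ) :
    Tendsto (fun T => boxMean k T (f * fejerKernel B x)) atTop (𝓝 ((fejerMean B f : APB k) x)) := by
  have hmean (T : ℝ) : boxMean k T (f * fejerKernel B x) = (B.card : ℂ)⁻¹ • ∑ α ∈ B, ∑ β ∈ B,
      apExp k (α - β) x • boxMean k T (apExp k (-(α - β)) * f) := by
    rw [mul_comm, fejerKernel_eq_sum]
    simp only [smul_mul_assoc, Finset.sum_mul, map_smul, map_sum]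
  have hcoe : (fejerMean B f : APB k) x = (B.card : ℂ)⁻¹ • ∑ α ∈ B, ∑ β ∈ B,
      apExp k (α - β) x • bohrCoeff k f (α - β) := by
    simp [fejerMean_apply, APalg.coe_exp, mul_comm]
  simp_rw [hmean, hcoe]
  exact (tendsto_finsetSum _ fun α _ => tendsto_finsetSum _ fun β _ =>
    (tendsto_bohrCoeff f (α - β)).const_smul _).const_smul _

theorem norm_fejerMean_le (B : Finset (Fin k → ℝ)) : ‖fejerMean B‖ ≤ 1 := by
  refine ContinuousLinearMap.opNorm_le_bound _ zero_le_one fun f => ?_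
  have hone : ‖fejerMean B 1‖ ≤ 1 := by
    rw [show (1 : APalg k) = APalg.exp 0 from Subtype.ext apExp_zero.symm, fejerMean_exp]
    refine (norm_smul_le _ _).trans (mul_le_one₀ ?_ (norm_nonneg _) (APalg.norm_exp_le 0))
    simpa using div_self_le_one (B.card : ℝ)
  rw [one_mul]
  refine (norm_le (norm_nonneg f)).2 fun x => ?_
  calc ‖(fejerMean B f : APB k) x‖ ≤ ‖f‖ * ‖(fejerMean B 1 : APB k) x‖ := by
        refine le_of_tendsto_of_tendsto' (tendsto_boxMean_mul_fejerKernel B f x).norm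
          ((tendsto_boxMean_mul_fejerKernel B 1 x).norm.const_mul _) fun T => ?_
        rw [OneMemClass.coe_one, one_mul]
        exact norm_averageL_mul_le _ (f : APB k) (norm_fejerKernel_apply B x)
    _ ≤ ‖f‖ := mul_le_of_le_one_right (norm_nonneg f) ((norm_coe_le_norm _ x).trans hone)

theorem exists_tendsto_fejerMean :
    ∃ B : Finset (Fin k → ℝ) × ℕ → Finset (Fin k → ℝ),
      ∀ f, Tendsto (fun i => fejerMean (B i) f) atTop (𝓝 f) := by
  obtain ⟨B, hB⟩ := exists_tendsto_card_filter_add_mem_div_card (G := Fin k → ℝ)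
  refine ⟨B, tendsto_of_dense_span (ψ := .id ℂ _) (fun i => norm_fejerMean_le (B i))
    APalg.dense_span_exp (Set.forall_mem_range.2 fun μ => ?_)⟩
  have h := ((Complex.continuous_ofReal.tendsto 1).comp (hB μ)).smul_const (APalg.exp μ)
  simpa [fejerMean_exp, Function.comp_def] using h

/-! ### Almost periodic functions with prescribed spectrum -/

theorem fejerMean_mem_span {Δ : Set (Fin k → ℝ)} {f : APalg k} (hf : bohrSpectrum k f ⊆ Δ)
    (B : Finset (Fin k → ℝ)) : (fejerMean B f : APB k) ∈ Submodule.span ℂ (apExp k '' Δ) := by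
  rw [fejerMean_apply]
  push_cast
  refine Submodule.smul_mem _ _ (Submodule.sum_mem _ fun α _ => Submodule.sum_mem _ fun β _ => ?_)
  by_cases h : α - β ∈ Δ
  · exact Submodule.smul_mem _ _ (Submodule.subset_span ⟨_, h, rfl⟩)
  · rw [Function.notMem_support.1 fun h' => h (hf h'), zero_smul]
    exact Submodule.zero_mem _

theorem bohrCoeff_eq_zero_of_mem_topologicalClosure_span {Δ : Set (Fin k → ℝ)} {f : APalg k}
    (hf : (f : APB k) ∈ (Submodule.span ℂ (apExp k '' Δ)).topologicalClosure) {lam : Fin k → ℝ}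
    (hlam : lam ∉ Δ) : bohrCoeff k f lam = 0 := by
  have hclosed : IsClosed (APalg k : Set (APB k)) := Subalgebra.isClosed_topologicalClosure _
  let V := (bohrCoeffL lam).ker.map (APalg k).val.toLinearMap
  have hV : IsClosed (V : Set (APB k)) :=
    hclosed.isClosedEmbedding_subtypeVal.isClosedMap _ (bohrCoeffL lam).isClosed_ker
  have hexp : apExp k '' Δ ⊆ V := by
    rintro _ ⟨μ, hμ, rfl⟩
    refine ⟨APalg.exp μ, ?_, rfl⟩
    exact (bohrCoeffL_exp lam μ).trans (if_neg (by rintro rfl; exact hlam hμ))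
  obtain ⟨g, hg, hgf⟩ :=
    Submodule.topologicalClosure_minimal _ (Submodule.span_le.2 hexp) hV hf
  exact (Subtype.ext hgf : g = f) ▸ hg

theorem APmem_iff_mem_topologicalClosure_span {Δ : Set (Fin k → ℝ)} {f : APB k} :
    APmem k Δ f ↔ f ∈ (Submodule.span ℂ (apExp k '' Δ)).topologicalClosure := by
  constructor
  · rintro ⟨hf, hspec⟩
    lift f to APalg k using hf
    obtain ⟨B, hB⟩ := exists_tendsto_fejerMean (k := k)
    exact mem_closure_of_tendsto ((continuous_subtype_val.tendsto f).comp (hB f))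
      (.of_forall fun i => fejerMean_mem_span hspec (B i))
  · intro hf
    have hle : Submodule.span ℂ (apExp k '' Δ) ≤ Subalgebra.toSubmodule (APalg k) := by
      refine Submodule.span_le.2 ?_
      rintro _ ⟨μ, -, rfl⟩
      exact (APalg.exp μ).2
    have hfAP : f ∈ APalg k :=
      Submodule.topologicalClosure_minimal _ hle (Subalgebra.isClosed_topologicalClosure _) hf
    refine ⟨hfAP, fun lam hlam => by_contra fun h => hlam ?_⟩
    exact bohrCoeff_eq_zero_of_mem_topologicalClosure_span (f := ⟨f, hfAP⟩) hf h

/-- The closed subalgebra of `APB k` generated by the exponentials with frequencies in `Λ`; this is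
`AP^k_Λ`, see `APmem_iff_mem_apSubalgebra`. -/
def apSubalgebra (Λ : AddSubmonoid (Fin k → ℝ)) : Subalgebra ℂ (APB k) :=
  (Algebra.adjoin ℂ (apExp k '' Λ)).topologicalClosure

theorem toSubmodule_apSubalgebra (Λ : AddSubmonoid (Fin k → ℝ)) :
    Subalgebra.toSubmodule (apSubalgebra Λ) =
      (Submodule.span ℂ (apExp k '' Λ)).topologicalClosure := by
  rw [← adjoin_apExp_toSubmodule]
  rfl

theorem APmem_iff_mem_apSubalgebra {Λ : AddSubmonoid (Fin k → ℝ)} {f : APB k} :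
    APmem k Λ f ↔ f ∈ apSubalgebra Λ := by
  rw [APmem_iff_mem_topologicalClosure_span, ← toSubmodule_apSubalgebra,
    Subalgebra.mem_toSubmodule]

/-! ### Dilations of trigonometric polynomials -/

section Dilation

variable {Λ : AddSubmonoid (Fin k → ℝ)}

instance : CompleteSpace (apSubalgebra Λ) :=
  (Subalgebra.isClosed_topologicalClosure _).completeSpace_coe

/-- The exponential `apExp k lam`, `lam ∈ Λ`, as an element of `apSubalgebra Λ`. -/
def apSubalgebra.exp (lam : Λ) : apSubalgebra Λ :=
  ⟨apExp k lam, subset_closure (Algebra.subset_adjoin ⟨lam, lam.2, rfl⟩)⟩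

theorem apSubalgebra.exp_zero : exp (0 : Λ) = 1 := Subtype.ext apExp_zero

theorem apSubalgebra.exp_add (lam μ : Λ) : exp (lam + μ) = exp lam * exp μ :=
  Subtype.ext (apExp_add _ _)

/-- The dilation `∑ c_λ e_λ ↦ ∑ c_λ e^{-z⟨λ, v⟩} e_λ` of trigonometric polynomials, that is,
translation of the argument by `z i v ∈ ℂ^k`. -/
def dilation (v : Fin k → ℝ) (z : ℂ) : AddMonoidAlgebra ℂ Λ →ₐ[ℂ] apSubalgebra Λ :=
  AddMonoidAlgebra.lift ℂ (apSubalgebra Λ) Λ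
    { toFun lam := Complex.exp (-(z * (lam.toAdd.1 ⬝ᵥ v : ℝ))) • apSubalgebra.exp lam.toAdd
      map_one' := by simp [apSubalgebra.exp_zero]
      map_mul' lam μ := by
        rw [smul_mul_smul_comm, ← Complex.exp_add, ← apSubalgebra.exp_add, toAdd_mul,
          AddSubmonoid.coe_add, add_dotProduct, Complex.ofReal_add, mul_add, neg_add] }

/-- The trigonometric polynomial with given coefficients. -/
def trigPoly : AddMonoidAlgebra ℂ Λ →ₐ[ℂ] apSubalgebra Λ := dilation 0 0

theorem dilation_apply (v : Fin k → ℝ) (z : ℂ) (P : AddMonoidAlgebra ℂ Λ) :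
    dilation v z P = ∑ lam ∈ P.coeff.support,
      Complex.exp (-(z * (lam.1 ⬝ᵥ v : ℝ))) • P.coeff lam • apSubalgebra.exp lam := by
  simp [dilation, AddMonoidAlgebra.lift_apply, Finsupp.sum, smul_comm (P.coeff _)]

theorem dilation_zero (v : Fin k → ℝ) : dilation v 0 = trigPoly (Λ := Λ) := by
  ext P
  simp [trigPoly, dilation_apply]

theorem denseRange_trigPoly : DenseRange (trigPoly (Λ := Λ)) := by
  have hrange : Submodule.span ℂ (apExp k '' Λ) ≤
      LinearMap.range ((apSubalgebra Λ).val.comp trigPoly).toLinearMap := by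
    refine Submodule.span_le.2 ?_
    rintro _ ⟨lam, hlam, rfl⟩
    exact ⟨.single ⟨lam, hlam⟩ 1, by simp [trigPoly, dilation, apSubalgebra.exp]⟩
  refine Subtype.dense_iff.2 fun f hf => ?_
  rw [← Set.range_comp]
  exact closure_mono hrange ((toSubmodule_apSubalgebra Λ).le hf)

theorem continuous_dilation (v : Fin k → ℝ) (P : AddMonoidAlgebra ℂ Λ) :
    Continuous fun z => dilation v z P := by
  simp only [dilation_apply]
  fun_prop

theorem dilation_mul_I_apply (v : Fin k → ℝ) (y : ℝ) (P : AddMonoidAlgebra ℂ Λ)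
    (x : Fin k → ℝ) :
    (dilation v (y * Complex.I) P : APB k) x = (trigPoly P : APB k) (x - y • v) := by
  simp only [← dilation_zero v, dilation_apply]
  simp only [AddSubmonoidClass.coe_finsetSum, SetLike.val_smul, BoundedContinuousFunction.sum_apply,
    coe_smul, smul_eq_mul, apSubalgebra.exp, apExp_apply, dotProduct_sub, dotProduct_smul]
  refine Finset.sum_congr rfl fun lam _ => ?_
  rw [mul_left_comm, mul_left_comm (Complex.exp _), ← Complex.exp_add, ← Complex.exp_add]
  push_cast
  ring_nf

theorem norm_dilation_mul_I_le (v : Fin k → ℝ) (y : ℝ) (P : AddMonoidAlgebra ℂ Λ) :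
    ‖dilation v (y * Complex.I) P‖ ≤ ‖trigPoly P‖ :=
  (norm_le (norm_nonneg _)).2 fun x => (congrArg norm (dilation_mul_I_apply v y P x)).trans_le
    (norm_coe_le_norm (trigPoly P : APB k) _)

theorem norm_sum_exp_smul_le {ι E : Type*} [NormedAddCommGroup E] [NormedSpace ℂ E]
    {s : Finset ι} {r : ι → ℝ} (hr : ∀ i ∈ s, 0 ≤ r i) (x : ι → E) {C : ℝ}
    (hC : ∀ y : ℝ, ‖∑ i ∈ s, Complex.exp (-(y * Complex.I * r i)) • x i‖ ≤ C) {z : ℂ}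
    (hz : 0 ≤ z.re) : ‖∑ i ∈ s, Complex.exp (-(z * r i)) • x i‖ ≤ C := by
  set f : ℂ → E := fun z => ∑ i ∈ s, Complex.exp (-(z * r i)) • x i
  have hbound (z : ℂ) (hz : 0 ≤ z.re) : ‖f z‖ ≤ ∑ i ∈ s, ‖x i‖ := by
    refine norm_sum_le_of_le _ fun i hi => ?_
    rw [norm_smul, Complex.norm_exp]
    refine mul_le_of_le_one_left (norm_nonneg _) (Real.exp_le_one_iff.2 ?_)
    simpa using mul_nonneg hz (hr i hi)
  have hdiff : Differentiable ℂ f := by fun_prop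
  refine PhragmenLindelof.right_half_plane_of_bounded_on_real (f := f)
    hdiff.diffContOnCl ⟨0, two_pos, 0, ?_⟩ ?_ hC hz
  · refine Asymptotics.IsBigO.of_bound (∑ i ∈ s, ‖x i‖) ?_
    filter_upwards [mem_inf_of_right (mem_principal_self _)] with z hz
    simpa using hbound z (le_of_lt hz)
  · refine ⟨∑ i ∈ s, ‖x i‖, eventually_map.2 ?_⟩
    filter_upwards [eventually_ge_atTop 0] with t ht using hbound t (by simpa)

theorem norm_dilation_le {v : Fin k → ℝ} {P : AddMonoidAlgebra ℂ Λ}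
    (hP : ∀ lam ∈ P.coeff.support, 0 ≤ lam.1 ⬝ᵥ v) {z : ℂ} (hz : 0 ≤ z.re) :
    ‖dilation v z P‖ ≤ ‖trigPoly P‖ := by
  rw [dilation_apply]
  exact norm_sum_exp_smul_le hP _ (fun y => dilation_apply v _ P ▸ norm_dilation_mul_I_le v y P) hz

theorem tendsto_dilation_atTop {v : Fin k → ℝ} {P : AddMonoidAlgebra ℂ Λ}
    (hP : ∀ lam ∈ P.coeff.support, lam ≠ 0 → 0 < lam.1 ⬝ᵥ v) :
    Tendsto (fun t : ℝ => dilation v t P) atTop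
      (𝓝 (algebraMap ℂ (apSubalgebra Λ) (P.coeff 0))) := by
  have hterm (lam : Λ) (hlam : lam ∈ P.coeff.support) :
      Tendsto (fun t : ℝ => Complex.exp (-(t * (lam.1 ⬝ᵥ v : ℝ))) •
        P.coeff lam • apSubalgebra.exp lam) atTop
        (𝓝 (if lam = 0 then algebraMap ℂ (apSubalgebra Λ) (P.coeff 0) else 0)) := by
    split_ifs with h
    · simp [h, apSubalgebra.exp_zero, Algebra.algebraMap_eq_smul_one]
    · have hexp : Tendsto (fun t : ℝ => Complex.exp (-(t * (lam.1 ⬝ᵥ v : ℝ)))) atTop (𝓝 0) := by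
        refine Complex.tendsto_exp_comap_re_atBot.comp (tendsto_comap_iff.2 ?_)
        simpa [Function.comp_def] using tendsto_id.atTop_mul_const (hP lam hlam h)
      simpa using hexp.smul_const (P.coeff lam • apSubalgebra.exp lam)
  have hsum := tendsto_finsetSum _ hterm
  simp_rw [← dilation_apply] at hsum
  convert hsum
  rw [Finset.sum_ite_eq']
  split_ifs with h
  · rfl
  · rw [Finsupp.notMem_support_iff.1 h, map_zero]

end Dilation

/-! ### The Hermite property -/

section Hermite

variable {Λ : AddSubmonoid (Fin k → ℝ)}

theorem exists_forall_mem_support_dotProduct_pos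
    (hΛ : (0 : Fin k → ℝ) ∉ convexHull ℝ (Λ \ {0})) {T : Set (AddMonoidAlgebra ℂ Λ)}
    (hT : T.Finite) :
    ∃ v : Fin k → ℝ, ∀ P ∈ T, ∀ lam ∈ P.coeff.support, lam ≠ 0 → 0 < lam.1 ⬝ᵥ v := by
  let F : Set (Fin k → ℝ) := (⋃ P ∈ T, Subtype.val '' (P.coeff.support : Set Λ)) \ {0}
  have hF : F.Finite := (hT.biUnion fun P _ => P.coeff.support.finite_toSet.image _).sdiff
  have hFΛ : F ⊆ Λ \ {0} := Set.sdiff_subset_sdiff_left <|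
    Set.iUnion₂_subset fun P _ => Subtype.coe_image_subset _ _
  obtain ⟨v, hv⟩ := exists_forall_dotProduct_pos hF fun h => hΛ (convexHull_mono hFΛ h)
  exact ⟨v, fun P hP lam hlam h0 => hv lam
    ⟨Set.mem_biUnion hP ⟨lam, hlam, rfl⟩, fun h => h0 (Subtype.ext h)⟩⟩

theorem rowEquiv_single_trigPoly (hΛ : (0 : Fin k → ℝ) ∉ convexHull ℝ (Λ \ {0})) {n : Type*}
    [Fintype n] [DecidableEq n] (i : n) {P Q : n → AddMonoidAlgebra ℂ Λ}
    (hPQ : ‖1 - (trigPoly ∘ P) ⬝ᵥ (trigPoly ∘ Q)‖ < 1) :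
    RowEquiv (Pi.single i 1) (trigPoly ∘ P) := by
  obtain ⟨v, hv⟩ := exists_forall_mem_support_dotProduct_pos hΛ
    (((Set.finite_range P).union (Set.finite_range Q)).insert (1 - P ⬝ᵥ Q))
  have hmap (f : AddMonoidAlgebra ℂ Λ →ₐ[ℂ] apSubalgebra Λ) :
      f (1 - P ⬝ᵥ Q) = 1 - (f ∘ P) ⬝ᵥ (f ∘ Q) := by
    rw [map_sub, map_one]
    exact congrArg (1 - ·) (RingHom.map_dotProduct f.toRingHom P Q)
  rw [← hmap] at hPQ
  let p (t : ℝ) : n → apSubalgebra Λ := dilation v t ∘ P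
  let q (t : ℝ) : n → apSubalgebra Λ := dilation v t ∘ Q
  let p₀ : n → apSubalgebra Λ := algebraMap ℂ _ ∘ fun j => (P j).coeff 0
  let q₀ : n → apSubalgebra Λ := algebraMap ℂ _ ∘ fun j => (Q j).coeff 0
  have hp : Tendsto p atTop (𝓝 p₀) :=
    tendsto_pi_nhds.2 fun j => tendsto_dilation_atTop (hv _ (by simp))
  have hq : Tendsto q atTop (𝓝 q₀) :=
    tendsto_pi_nhds.2 fun j => tendsto_dilation_atTop (hv _ (by simp))
  have hnorm (t : ℝ) (ht : 0 ≤ t) : ‖1 - p t ⬝ᵥ q t‖ ≤ ‖trigPoly (1 - P ⬝ᵥ Q)‖ := by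
    rw [← hmap]
    refine norm_dilation_le (fun lam hlam => ?_) ht
    rcases eq_or_ne lam 0 with rfl | h0
    · simp
    · exact (hv _ (by simp) lam hlam h0).le
  have hconst : IsUnit (p₀ ⬝ᵥ q₀) :=
    isUnit_dotProduct_of_tendsto hp hq ((eventually_ge_atTop 0).mono hnorm) hPQ
  have hcont : Continuous p := continuous_pi fun j =>
    (continuous_dilation v (P j)).comp Complex.continuous_ofReal
  have hpath : RowEquiv p₀ (p 0) := .of_isPreconnected_of_tendsto isPreconnected_Ici
    hcont.continuousOn (fun t ht => isUnit_of_norm_one_sub_lt_one ((hnorm t ht).trans_lt hPQ))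
    (eventually_ge_atTop 0) hp hconst Set.self_mem_Ici
  have hp0 : p 0 = trigPoly ∘ P := by simp [p, dilation_zero]
  exact hp0 ▸ (RowEquiv.single_algebraMap i hconst).trans hpath

theorem isHermiteRing_apSubalgebra (hΛ : (0 : Fin k → ℝ) ∉ convexHull ℝ (Λ \ {0})) :
    IsHermiteRing (apSubalgebra Λ) := by
  refine .of_rowEquiv_single fun m a b hab => ?_
  obtain ⟨P, Q, hPQ, hP⟩ := exists_rowEquiv_comp_of_denseRange denseRange_trigPoly hab
  exact (rowEquiv_single_trigPoly hΛ 0 hPQ).trans hP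

end Hermite

/-- **Hermite property of `AP^k_Σ`** (Theorem 1.2 for `AP`).  Let `S ⊂ ℝ^k` be
a halfspace and `Σ ⊆ S` an additive semigroup containing `0`.  Then the unital
Banach algebra `AP^k_Σ` is an Hermite ring: every unimodular row
`(a_0, …, a_m)` over `AP^k_Σ` is the first row of a matrix over `AP^k_Σ` that
is invertible over `AP^k_Σ`. -/
theorem ap_semigroup_hermite (k : ℕ) (S Sg : Set (Fin k → ℝ))
    (hS : IsHalfspace k S) (hSgS : Sg ⊆ S) (h0 : (0 : Fin k → ℝ) ∈ Sg)
    (hadd : ∀ x ∈ Sg, ∀ y ∈ Sg, x + y ∈ Sg) :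
    ∀ (m : ℕ) (a b : Fin (m + 1) → APB k),
      (∀ i, APmem k Sg (a i)) → (∀ i, APmem k Sg (b i)) →
      (∑ i, a i * b i) = 1 →
      ∃ M N : Matrix (Fin (m + 1)) (Fin (m + 1)) (APB k),
        (∀ i j, APmem k Sg (M i j)) ∧ (∀ i j, APmem k Sg (N i j)) ∧
        (∀ j, M 0 j = a j) ∧ M * N = 1 ∧ N * M = 1 := by
  intro m a b ha hb hab
  let Λ : AddSubmonoid (Fin k → ℝ) :=
    { carrier := Sg, zero_mem' := h0, add_mem' := fun hx hy => hadd _ hx _ hy }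
  have hΛ : (0 : Fin k → ℝ) ∉ convexHull ℝ (Λ \ {0}) := fun h =>
    hS.zero_notMem_convexHull (convexHull_mono (Set.sdiff_subset_sdiff_left hSgS) h)
  have hmem (f : APB k) : APmem k Sg f ↔ f ∈ apSubalgebra Λ := APmem_iff_mem_apSubalgebra (Λ := Λ)
  simp only [hmem] at ha hb ⊢
  exact (isHermiteRing_apSubalgebra hΛ).exists_matrix_mem_subalgebra ha hb hab
end
end

section
/- Let S ⊂ ℝ^k be a halfspace. Then there exists a unique vector Y ∈ ℝ^k of Euclidean unit length such that ⟨x, Y⟩ ≥ 0 for every x ∈ S, where ⟨·,·⟩ is the standard inner product on ℝ^k. -/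
/- Almost periodic functions of `k` real variables, their Bohr-Fourier
coefficients and spectra, the Wiener algebra, and halfspaces. -/

open MeasureTheory Filter BoundedContinuousFunction

noncomputable section

/- A halfspace `S` is convex with nonempty interior, because it spans the whole space, and `0` is
not an interior point.  Hahn-Banach thus gives a hyperplane through `0` with `S` on one side, whose
unit normal, suitably oriented, is the required vector.  For uniqueness, `S` contains `u - v` or
`v - u`, while unit vectors satisfy `⟪u - v, u⟫ = ‖u - v‖² / 2 = -⟪u - v, v⟫`; nonnegativity on `S`
therefore forces `u = v`. -/

open scoped RealInnerProductSpace Topology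

theorem affineSpan_eq_top_of_mem_or_neg_mem (R : Type*) {V : Type*} [Ring R] [AddCommGroup V]
    [Module R V] {s : Set V} (hs : ∀ x, x ∈ s ∨ -x ∈ s) : affineSpan R s = ⊤ := by
  have hzero : (0 : V) ∈ s := by simpa using hs 0
  have hspan : (affineSpan R s : Set V) = Submodule.span R s := by
    rw [← affineSpan_insert_zero, Set.insert_eq_of_mem hzero]
  refine SetLike.coe_injective (hspan.trans (Set.eq_univ_of_forall fun x => ?_))
  exact (hs x).elim (fun h => Submodule.subset_span h)
    fun h => neg_mem_iff.1 (Submodule.subset_span h)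

theorem interior_nonempty_of_mem_or_neg_mem {V : Type*} [NormedAddCommGroup V] [NormedSpace ℝ V]
    [FiniteDimensional ℝ V] {s : Set V} (hconvex : Convex ℝ s) (hs : ∀ x, x ∈ s ∨ -x ∈ s) :
    (interior s).Nonempty :=
  hconvex.interior_nonempty_iff_affineSpan_eq_top.2 (affineSpan_eq_top_of_mem_or_neg_mem ℝ hs)

theorem zero_notMem_interior_of_forall_eq_zero {G : Type*} [TopologicalSpace G] [AddGroup G]
    [ContinuousNeg G] [(𝓝[≠] (0 : G)).NeBot] {s : Set G}
    (hs : ∀ x, x ∈ s → -x ∈ s → x = 0) : (0 : G) ∉ interior s := by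
  intro hmem
  have hnhds : s ∈ 𝓝 (0 : G) := mem_interior_iff_mem_nhds.1 hmem
  have hneg : ∀ᶠ x in 𝓝 (0 : G), -x ∈ s :=
    continuous_neg.continuousAt.eventually_mem (by rwa [neg_zero])
  have hinter : ∀ᶠ x in 𝓝[≠] (0 : G), x ∈ s ∧ -x ∈ s :=
    (Filter.Eventually.and hnhds hneg).filter_mono nhdsWithin_le_nhds
  obtain ⟨x, ⟨hx, hx'⟩, hx₀⟩ := (hinter.and eventually_mem_nhdsWithin).exists
  exact hx₀ (hs x hx hx')

section InnerProductSpace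

variable {E : Type*} [NormedAddCommGroup E] [InnerProductSpace ℝ E] {s : Set E}

theorem exists_norm_eq_one_forall_inner_nonneg [CompleteSpace E] (hs : Convex ℝ s)
    (hint : (interior s).Nonempty) (hzero : 0 ∉ interior s) :
    ∃ u : E, ‖u‖ = 1 ∧ ∀ x ∈ s, 0 ≤ ⟪x, u⟫ := by
  obtain ⟨f, hf, hfs⟩ := geometric_hahn_banach_of_nonempty_interior_point hs hzero hint
  let v := (InnerProductSpace.toDual ℝ E).symm (-f)
  have hv : v ≠ 0 := by simpa [v] using hf
  have hvs : ∀ x ∈ s, 0 ≤ ⟪x, v⟫ := fun x hx => by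
    rw [real_inner_comm, InnerProductSpace.toDual_symm_apply]
    simpa using hfs x hx
  refine ⟨NormedSpace.normalize v, NormedSpace.norm_normalize hv, fun x hx => ?_⟩
  rw [NormedSpace.normalize, real_inner_smul_right]
  exact mul_nonneg (inv_nonneg.2 (norm_nonneg v)) (hvs x hx)

theorem real_inner_sub_left_of_norm_eq {u v : E} (hnorm : ‖u‖ = ‖v‖) :
    ⟪u - v, u⟫ = ‖u - v‖ ^ 2 / 2 := by
  rw [norm_sub_sq_real, inner_sub_left, real_inner_self_eq_norm_sq, real_inner_comm v u, ← hnorm]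
  ring

theorem eq_of_norm_eq_of_forall_inner_nonneg (hs : ∀ x, x ∈ s ∨ -x ∈ s) {u v : E}
    (hnorm : ‖u‖ = ‖v‖) (hu : ∀ x ∈ s, 0 ≤ ⟪x, u⟫) (hv : ∀ x ∈ s, 0 ≤ ⟪x, v⟫) : u = v := by
  have hu_sub : ⟪u - v, u⟫ = ‖u - v‖ ^ 2 / 2 := real_inner_sub_left_of_norm_eq hnorm
  have hv_sub : ⟪v - u, v⟫ = ‖u - v‖ ^ 2 / 2 := by
    rw [real_inner_sub_left_of_norm_eq hnorm.symm, norm_sub_rev]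
  have hsq : ‖u - v‖ ^ 2 ≤ 0 := by
    rcases hs (u - v) with h | h
    · have hle := hv _ h
      rw [← neg_sub, inner_neg_left, hv_sub] at hle
      linarith
    · have hle := hu _ h
      rw [inner_neg_left, hu_sub] at hle
      linarith
  exact sub_eq_zero.1 (norm_eq_zero.1 ((sq_nonpos_iff _).1 hsq))

theorem halfspace_exists_unique_unit_normal_general [CompleteSpace E] (hs : Convex ℝ s)
    (hint : (interior s).Nonempty) (hzero : 0 ∉ interior s) (htotal : ∀ x, x ∈ s ∨ -x ∈ s) :
    ∃! u : E, ‖u‖ = 1 ∧ ∀ x ∈ s, 0 ≤ ⟪x, u⟫ := by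
  obtain ⟨u, hu, hus⟩ := exists_norm_eq_one_forall_inner_nonneg hs hint hzero
  exact ⟨u, ⟨hu, hus⟩, fun v ⟨hv, hvs⟩ =>
    eq_of_norm_eq_of_forall_inner_nonneg htotal (hv.trans hu.symm) hvs hus⟩

end InnerProductSpace

theorem existsUnique_euclideanSpace_unit_normal_iff {ι : Type*} [Fintype ι] {S : Set (ι → ℝ)} :
    (∃! u : EuclideanSpace ℝ ι, ‖u‖ = 1 ∧ ∀ x ∈ WithLp.ofLp ⁻¹' S, 0 ≤ ⟪x, u⟫) ↔
      ∃! Y : ι → ℝ, √(∑ j, Y j ^ 2) = 1 ∧ ∀ x ∈ S, 0 ≤ ∑ j, x j * Y j := by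
  refine (WithLp.equiv 2 (ι → ℝ)).existsUnique_congr fun u => and_congr ?_ ?_
  · simp [EuclideanSpace.norm_eq]
  · rw [(WithLp.equiv 2 (ι → ℝ)).symm.surjective.forall]
    simp [PiLp.inner_apply, mul_comm]

namespace IsHalfspace

variable {k : ℕ} {S : Set (Fin k → ℝ)}

theorem mem_or_neg_mem (hS : IsHalfspace k S) (x : Fin k → ℝ) : x ∈ S ∨ -x ∈ S :=
  Set.eq_univ_iff_forall.1 hS.union x

theorem eq_zero_of_mem_of_neg_mem (hS : IsHalfspace k S) {x : Fin k → ℝ} (hx : x ∈ S)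
    (hx' : -x ∈ S) : x = 0 :=
  hS.inter.subset ⟨hx, hx'⟩

theorem convex (hS : IsHalfspace k S) : Convex ℝ S :=
  fun x hx y hy a b ha hb _ =>
    hS.add_mem _ (hS.smul_mem x hx a ha) _ (hS.smul_mem y hy b hb)

end IsHalfspace

/-- **Proposition 3.2.**  Let `S ⊂ ℝ^k` (`k ≥ 1`) be a halfspace.  Then there
is a unique vector `Y ∈ ℝ^k` of Euclidean unit length such that `⟨x, Y⟩ ≥ 0`
for every `x ∈ S`. -/
theorem halfspace_exists_unique_unit_normal (k : ℕ) (hk : 0 < k)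
    (S : Set (Fin k → ℝ)) (hS : IsHalfspace k S) :
    ∃! Y : Fin k → ℝ,
      Real.sqrt (∑ j, Y j ^ 2) = 1 ∧ ∀ x ∈ S, 0 ≤ ∑ j, x j * Y j := by
  have : NeZero k := ⟨hk.ne'⟩
  let T : Set (EuclideanSpace ℝ (Fin k)) := WithLp.ofLp ⁻¹' S
  have hconvex : Convex ℝ T := hS.convex.linear_preimage (WithLp.linearEquiv 2 ℝ _).toLinearMap
  have htotal : ∀ x, x ∈ T ∨ -x ∈ T := fun x => hS.mem_or_neg_mem x.ofLp
  have hsalient : ∀ x, x ∈ T → -x ∈ T → x = 0 := fun x hx hx' =>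
    WithLp.ofLp_injective 2 (hS.eq_zero_of_mem_of_neg_mem hx hx')
  exact existsUnique_euclideanSpace_unit_normal_iff.1 <|
    halfspace_exists_unique_unit_normal_general hconvex
      (interior_nonempty_of_mem_or_neg_mem hconvex htotal)
      (zero_notMem_interior_of_forall_eq_zero hsalient) htotal
end
end

section
/- Let A be a commutative unital Banach algebra over ℂ with a set of generators Λ, let X(Λ) be the set of functions Λ → ℂ with the product topology, let χ : M(A) → X(Λ) be the evaluation embedding, and let P_Λ be the smallest algebra of functions X(Λ) → ℂ (under pointwise operations) containing the constants and all coordinate projections π_λ(f) = f(λ), λ ∈ Λ. If f ∈ X(Λ) satisfies |p(f)| ≤ max{ |p(α)| : α ∈ χ(M(A)) } for every p ∈ P_Λ, then f ∈ χ(M(A)). In other words, χ(M(A)) is polynomially convex in X(Λ). -/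
open WeakDual

/-!
Let `a` generate a dense subalgebra of `A`, and suppose that `f` satisfies the polynomial
inequalities. Every character `φ` of `A` satisfies `|φ x| ≤ ‖x‖`, so `|p(f)| ≤ sup_φ |φ(p(a))|`
gives `|p(f)| ≤ ‖p(a)‖` for every polynomial `p`. Hence `p(a) ↦ p(f)` is a well-defined continuous
algebra homomorphism on a dense subalgebra; its continuous extension to `A` is a character that
sends each generator `a i` to `f i`. Noncommutative polynomials, i.e. elements of a free algebra,
serve just as well as commutative ones, since their values in a field only depend on their
commutative image.
-/

section FreeAlgebraEvaluation

variable {R A B ι : Type*} [CommSemiring R] [Semiring A] [Algebra R A] [Semiring B] [Algebra R B]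

theorem map_freeAlgebra_lift {F : Type*} [FunLike F A B] [AlgHomClass F R A B] (φ : F)
    (a : ι → A) (p : FreeAlgebra R ι) :
    φ (FreeAlgebra.lift R a p) = FreeAlgebra.lift R (fun i => φ (a i)) p := by
  have h : (AlgHomClass.toAlgHom φ).comp (FreeAlgebra.lift R a) =
      FreeAlgebra.lift R fun i => φ (a i) := by
    ext i
    simp
  exact DFunLike.congr_fun h p

theorem denseRange_freeAlgebra_lift [TopologicalSpace A] [IsTopologicalSemiring A] {a : ι → A}
    (ha : (Algebra.adjoin R (Set.range a)).topologicalClosure = ⊤) :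
    DenseRange (FreeAlgebra.lift R a) := by
  rw [Algebra.adjoin_range_eq_range_freeAlgebra_lift] at ha
  exact dense_iff_closure_eq.2 (congrArg SetLike.coe ha)

end FreeAlgebraEvaluation

/-- The algebra `P_Λ` of polynomial functions on `ι → R`, generated by the constants and the
coordinate projections. -/
def coordinateAlgebra (R ι : Type*) [CommSemiring R] : Subalgebra R ((ι → R) → R) :=
  Algebra.adjoin R {q | ∃ i, q = fun g => g i}

theorem freeAlgebra_lift_mem_coordinateAlgebra {R ι : Type*} [CommSemiring R]
    (p : FreeAlgebra R ι) :
    (fun g : ι → R => FreeAlgebra.lift R g p) ∈ coordinateAlgebra R ι := by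
  have heval : FreeAlgebra.lift R (fun i (g : ι → R) => g i) p =
      fun g => FreeAlgebra.lift R g p :=
    funext fun g => map_freeAlgebra_lift (Pi.evalAlgHom R (fun _ : ι → R => R) g) _ p
  have hcoord : {q : (ι → R) → R | ∃ i, q = fun g => g i} = Set.range fun i g => g i :=
    Set.ext fun _ => exists_congr fun _ => eq_comm
  rw [coordinateAlgebra, hcoord, Algebra.adjoin_range_eq_range_freeAlgebra_lift, ← heval]
  exact AlgHom.mem_range_self _ p

/-- A set `K` of points of `ι → 𝕜` is polynomially convex if it contains every point `f` with
`|p(f)| ≤ sup_K |p|` for all polynomial functions `p`. The inequality is expressed through the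
upper bounds `C` of `|p|` on `K`, which makes it void where `p` is unbounded on `K`. -/
def IsPolynomiallyConvex {𝕜 ι : Type*} [NormedField 𝕜] (K : Set (ι → 𝕜)) : Prop :=
  ∀ f : ι → 𝕜,
    (∀ p ∈ coordinateAlgebra 𝕜 ι, ∀ C, 0 ≤ C → (∀ g ∈ K, ‖p g‖ ≤ C) → ‖p f‖ ≤ C) → f ∈ K

theorem norm_algHom_apply_le_of_continuous {𝕜 A B F : Type*} [NontriviallyNormedField 𝕜]
    [SeminormedRing A] [NormedAlgebra 𝕜 A] [SeminormedRing B] [NormedAlgebra 𝕜 B]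
    (hB : IsPowMul (norm : B → ℝ)) [FunLike F A B] [AlgHomClass F 𝕜 A B] (φ : F)
    (hφ : Continuous φ) (x : A) : ‖φ x‖ ≤ ‖x‖ :=
  contraction_of_isPowMul hB (f := (φ : A →+* B))
    (SemilinearMapClass.bound_of_continuous (σ₁₂ := RingHom.id 𝕜) φ hφ) x

theorem norm_character_apply_le {𝕜 A : Type*} [NontriviallyNormedField 𝕜] [SeminormedRing A]
    [NormedAlgebra 𝕜 A] (φ : characterSpace 𝕜 A) (x : A) : ‖φ x‖ ≤ ‖x‖ :=
  norm_algHom_apply_le_of_continuous (𝕜 := 𝕜) (fun c n _ => norm_pow c n) φ (map_continuous φ) x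

theorem exists_continuousAlgHom_extension_of_norm_le {𝕜 A B C : Type*} [NormedField 𝕜]
    [SeminormedRing A] [NormedAlgebra 𝕜 A] [Ring B] [Algebra 𝕜 B] [NormedRing C]
    [NormedAlgebra 𝕜 C] [CompleteSpace C] {e : B →ₐ[𝕜] A} (he : DenseRange e) {g : B →ₐ[𝕜] C}
    (hg : ∃ K : ℝ, ∀ b, ‖g b‖ ≤ K * ‖e b‖) :
    ∃ ψ : A →A[𝕜] C, ∀ b, ψ (e b) = g b := by
  let L : A →L[𝕜] C := g.toLinearMap.extendOfNorm e.toLinearMap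
  have hL (b : B) : L (e b) = g b := LinearMap.extendOfNorm_eq he hg b
  have hone : L 1 = 1 := by rw [← map_one e, hL, map_one]
  have hmul (x y : A) : L (x * y) = L x * L y := by
    refine he.induction_on₂ (p := fun x y => L (x * y) = L x * L y)
      (isClosed_eq (by fun_prop) (by fun_prop)) (fun b c => ?_) x y
    rw [← map_mul, hL, hL, hL, map_mul]
  exact ⟨⟨AlgHom.ofLinearMap L.toLinearMap hone hmul, L.continuous⟩, hL⟩

section Characters

/-- The map `χ` sending a character to its values at the family `a`. -/
noncomputable def characterEval (𝕜 : Type*) {A ι : Type*} [CommSemiring 𝕜] [TopologicalSpace 𝕜]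
    [ContinuousAdd 𝕜] [ContinuousConstSMul 𝕜 𝕜] [NonUnitalNonAssocSemiring A]
    [TopologicalSpace A] [Module 𝕜 A] (a : ι → A) (φ : characterSpace 𝕜 A) : ι → 𝕜 :=
  fun i => φ (a i)

variable {𝕜 A ι : Type*} [NontriviallyNormedField 𝕜] [CompleteSpace 𝕜] [SeminormedRing A]
  [NormedAlgebra 𝕜 A] {a : ι → A}

theorem mem_range_characterEval_of_norm_le
    (ha : (Algebra.adjoin 𝕜 (Set.range a)).topologicalClosure = ⊤) {f : ι → 𝕜}
    (hf : ∃ K : ℝ, ∀ p, ‖FreeAlgebra.lift 𝕜 f p‖ ≤ K * ‖FreeAlgebra.lift 𝕜 a p‖) :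
    f ∈ Set.range (characterEval 𝕜 a) := by
  obtain ⟨ψ, hψ⟩ :=
    exists_continuousAlgHom_extension_of_norm_le (denseRange_freeAlgebra_lift ha) hf
  have hchar : ψ.toContinuousLinearMap ∈ characterSpace 𝕜 A := by
    rw [CharacterSpace.eq_set_map_one_map_mul]
    exact ⟨map_one ψ, map_mul ψ⟩
  refine ⟨⟨ψ.toContinuousLinearMap, hchar⟩, funext fun i => ?_⟩
  have hi : ψ (a i) = f i := by
    simpa only [FreeAlgebra.lift_ι_apply] using hψ (FreeAlgebra.ι 𝕜 i)
  exact hi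

theorem characterSpace_image_polynomially_convex_general
    (ha : (Algebra.adjoin 𝕜 (Set.range a)).topologicalClosure = ⊤) :
    IsPolynomiallyConvex (Set.range (characterEval 𝕜 a)) := by
  intro f hf
  refine mem_range_characterEval_of_norm_le ha ⟨1, fun p => ?_⟩
  rw [one_mul]
  refine hf _ (freeAlgebra_lift_mem_coordinateAlgebra p) _ (norm_nonneg _) ?_
  rintro _ ⟨φ, rfl⟩
  calc ‖FreeAlgebra.lift 𝕜 (characterEval 𝕜 a φ) p‖
      = ‖φ (FreeAlgebra.lift 𝕜 a p)‖ := congrArg norm (map_freeAlgebra_lift φ a p).symm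
    _ ≤ ‖FreeAlgebra.lift 𝕜 a p‖ := norm_character_apply_le φ _

end Characters

/-- **Proposition 2.4 (polynomial convexity of `χ(M(A))`).**  Let `A` be a
commutative unital Banach algebra over `ℂ` with a set of generators `Λ`, let
`X(Λ) = (Λ → ℂ)` carry the product topology, let `χ : M(A) → X(Λ)` be the
evaluation embedding of the maximal ideal space, and let `P_Λ` be the smallest
subalgebra of functions `X(Λ) → ℂ` containing the constants and all coordinate
projections `π_λ`.  If `f ∈ X(Λ)` satisfies
`|p(f)| ≤ sup { |p(α)| : α ∈ χ(M(A)) }` for every `p ∈ P_Λ`, then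
`f ∈ χ(M(A))`. -/
theorem characterSpace_image_polynomially_convex (A : Type*) [NormedCommRing A]
    [NormedAlgebra ℂ A] [CompleteSpace A] (Λ : Set A)
    (hgen : (Algebra.adjoin ℂ Λ).topologicalClosure = ⊤)
    (χ : ↥(characterSpace ℂ A) → (↥Λ → ℂ))
    (hχ : ∀ (φ : ↥(characterSpace ℂ A)) (l : ↥Λ), χ φ l = φ (l : A))
    (f : ↥Λ → ℂ)
    (hf : ∀ p : (↥Λ → ℂ) → ℂ,
      p ∈ Algebra.adjoin ℂ {q : (↥Λ → ℂ) → ℂ | ∃ l : ↥Λ, q = fun g => g l} →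
      ‖p f‖ ≤ ⨆ φ : ↥(characterSpace ℂ A), ‖p (χ φ)‖) :
    f ∈ Set.range χ := by
  have hrange : (Algebra.adjoin ℂ (Set.range ((↑) : Λ → A))).topologicalClosure = ⊤ := by
    rwa [Subtype.range_coe]
  obtain rfl : χ = characterEval ℂ ((↑) : Λ → A) := funext₂ hχ
  exact characterSpace_image_polynomially_convex_general hrange f fun p hp C hC hbound =>
    (hf p hp).trans (Real.iSup_le (fun φ => hbound _ ⟨φ, rfl⟩) hC)
end
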